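/- Let (G,L) be a minimal list-obstruction with all lists subsets of {1,2,3} of size at most 2, and suppose that all propagation paths in (G,L) have at most λ vertices, where λ ≥ 20. Then |V(G)| ≤ 4λ + 4. -/

import Mathlib

def ListColorableOn {V : Type*} (G : SimpleGraph V) (L : V → Finset ℕ) (S : Set V) : Prop :=
  ∃ c : V → ℕ, (∀ v ∈ S, c v ∈ L v) ∧ ∀ u ∈ S, ∀ w ∈ S, G.Adj u w → c u ≠ c w

def MinimalListObstruction {V : Type*} (G : SimpleGraph V) (L : V → Finset ℕ) : Prop :=
  ¬ ListColorableOn G L Set.univ ∧ ∀ S : Set V, S ≠ Set.univ → ListColorableOn G L S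

/-- A propagation path in `(G,L)`: a (not necessarily induced) path `v 0 - … - v n`
in `G` whose vertices beyond the first have lists of size two, together with the
coloring `c` obtained by giving `v 0` a color from its list and updating along the
path, such that every chord `v i v j` (with `3 ≤ i < j` and `j ≥ i + 2` in 1-based
indexing) satisfies the shape condition `S(v i) = αβ`, `S(v j) = βγ` with
`{α, β, γ} = {1, 2, 3}` pairwise distinct. -/
structure PropPath {V : Type*} (G : SimpleGraph V) (L : V → Finset ℕ) where
  n : ℕ
  v : Fin (n + 1) → V
  inj : Function.Injective v
  adj : ∀ i : Fin n, G.Adj (v i.castSucc) (v i.succ)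
  c : Fin (n + 1) → ℕ
  start_mem : c 0 ∈ L (v 0)
  size2 : ∀ i : Fin (n + 1), i ≠ 0 → (L (v i)).card = 2
  upd : ∀ i : Fin n, c i.succ ∈ L (v i.succ) ∧ c i.castSucc ∈ L (v i.succ) ∧
    c i.succ ≠ c i.castSucc
  chord : ∀ i j : Fin (n + 1), 2 ≤ i.val → i.val + 2 ≤ j.val → G.Adj (v i) (v j) →
    ∃ α β γ : ℕ, α ≠ β ∧ β ≠ γ ∧ α ≠ γ ∧
      L (v i) = {α, β} ∧ c i = α ∧ L (v j) = {β, γ} ∧ c j = β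

/-!
Giving a color to a vertex of a list of size two forces colors along paths. In a minimal
obstruction every color of every vertex leads in this way to a contradiction, and a shortest
forced sequence to one looks like a lasso: a stem from the first vertex to the `s`-th one, then a
loop whose last vertex contradicts the `s`-th one. If some set `K` of vertices already determines
the first color, then by minimality `K` and the lasso exhaust the graph.

A chord of the stem or of the loop that violates the shape condition would either provide a
shortcut or force its later end by itself; in the second case the vertices before the chord could
be deleted. So, past the first vertex outside `K`, both pieces are propagation paths. For `K` one
takes a vertex with a singleton list or, if there is none, a shortest forced sequence whose two
ends clash: it excludes one of the two colors of its first vertex, and it is itself a propagation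
path up to its last vertex.
-/

theorem eq_of_ne_of_ne_of_card_le_two {α : Type*} {s : Finset α} {a b c : α} (hs : s.card ≤ 2)
    (ha : a ∈ s) (hb : b ∈ s) (hc : c ∈ s) (hab : a ≠ b) (hcb : c ≠ b) : a = c := by
  by_contra hac
  exact hs.not_gt (Finset.two_lt_card.mpr ⟨a, ha, b, hb, c, hc, hab, hac, hcb.symm⟩)

theorem eq_of_ne_of_ne_of_card_le_three {α : Type*} {C s t : Finset α} {a b c d : α}
    (hC : C.card ≤ 3) (hs : s ⊆ C) (ht : t ⊆ C) (ha : a ∈ s) (hb : b ∈ t) (hat : a ∉ t)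
    (hbs : b ∉ s) (hc : c ∈ s) (hd : d ∈ t) (hca : c ≠ a) (hdb : d ≠ b) : c = d := by
  classical
  have hcard : (C.erase a).card ≤ 2 := by
    rw [Finset.card_erase_of_mem (hs ha)]
    omega
  exact eq_of_ne_of_ne_of_card_le_two hcard (Finset.mem_erase.mpr ⟨hca, hs hc⟩)
    (Finset.mem_erase.mpr ⟨ne_of_mem_of_not_mem hb hat, ht hb⟩)
    (Finset.mem_erase.mpr ⟨ne_of_mem_of_not_mem hd hat, ht hd⟩)
    (ne_of_mem_of_not_mem hc hbs) hdb

theorem eq_pair_of_mem_of_mem_of_card_eq_two {α : Type*} [DecidableEq α] {s : Finset α} {a b : α}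
    (hs : s.card = 2) (ha : a ∈ s) (hb : b ∈ s) (hab : a ≠ b) : s = {a, b} :=
  (Finset.eq_of_subset_of_card_le (Finset.insert_subset ha (Finset.singleton_subset_iff.mpr hb))
    (by rw [hs, Finset.card_pair hab])).symm

theorem encard_image_Ico_le {α : Type*} (f : ℕ → α) (a b : ℕ) :
    (f '' Set.Ico a b).encard ≤ (b - a : ℕ) := by
  calc (f '' Set.Ico a b).encard ≤ (Set.Ico a b).encard := Set.encard_image_le f _
    _ = (b - a : ℕ) := by
      rw [← Finset.coe_Ico, Set.encard_coe_eq_coe_finsetCard, Nat.card_Ico]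

section Coloring

variable {V : Type*} {G : SimpleGraph V} {L : V → Finset ℕ} {S T K K' : Set V} {f f' : V → ℕ}
  {x y z : V × ℕ}

/-- `f` is a proper coloring from the lists `L` of the subgraph induced by `S`; its values outside
`S` are arbitrary. -/
structure IsListColoring (G : SimpleGraph V) (L : V → Finset ℕ) (S : Set V) (f : V → ℕ) :
    Prop where
  mem : ∀ v ∈ S, f v ∈ L v
  ne : ∀ u ∈ S, ∀ w ∈ S, G.Adj u w → f u ≠ f w

theorem ListColorableOn.exists_isListColoring (h : ListColorableOn G L S) :
    ∃ f, IsListColoring G L S f :=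
  let ⟨f, hmem, hne⟩ := h
  ⟨f, hmem, hne⟩

theorem IsListColoring.mono (h : IsListColoring G L T f) (hST : S ⊆ T) : IsListColoring G L S f :=
  ⟨fun v hv => h.mem v (hST hv), fun u hu w hw => h.ne u (hST hu) w (hST hw)⟩

open Classical in
theorem IsListColoring.listColorableOn_univ (hf : IsListColoring G L S f)
    (hf' : IsListColoring G L Sᶜ f') (hcross : ∀ u ∈ S, ∀ w ∉ S, G.Adj u w → f u ≠ f' w) :
    ListColorableOn G L Set.univ := by
  refine ⟨S.piecewise f f', fun v _ => ?_, fun u _ w _ hadj => ?_⟩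
  · by_cases hv : v ∈ S
    · simpa only [Set.piecewise_eq_of_mem _ _ _ hv] using hf.mem v hv
    · simpa only [Set.piecewise_eq_of_notMem _ _ _ hv] using hf'.mem v hv
  · by_cases hu : u ∈ S <;> by_cases hw : w ∈ S <;>
      simp only [Set.piecewise_eq_of_mem, Set.piecewise_eq_of_notMem, hu, hw, not_false_eq_true]
    · exact hf.ne u hu w hw hadj
    · exact hcross u hu w hw hadj
    · exact (hcross w hw u hu hadj.symm).symm
    · exact hf'.ne u hu w hw hadj

theorem MinimalListObstruction.exists_coloring_compl_singleton
    (hmin : MinimalListObstruction G L) (w : V) : ∃ f, IsListColoring G L {w}ᶜ f :=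
  (hmin.2 _ (by simp)).exists_isListColoring

theorem MinimalListObstruction.nonempty (hmin : MinimalListObstruction G L) : Nonempty V := by
  by_contra! hV
  exact hmin.1 ⟨fun _ => 0, fun v => hV.elim v, fun v => hV.elim v⟩

theorem MinimalListObstruction.subsingleton_of_eq_empty (hmin : MinimalListObstruction G L) {u : V}
    (hu : L u = ∅) : Subsingleton V := by
  have heq : ∀ w, w = u := by
    by_contra! ⟨w, hw⟩
    obtain ⟨f, hf⟩ := hmin.exists_coloring_compl_singleton w
    simpa [hu] using hf.mem u hw.symm
  exact ⟨fun v w => (heq v).trans (heq w).symm⟩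

/-- Every list coloring of `K` gives the vertex `y.1` the color `y.2`. -/
def Pins (G : SimpleGraph V) (L : V → Finset ℕ) (K : Set V) (y : V × ℕ) : Prop :=
  ∀ f, IsListColoring G L K f → f y.1 = y.2

theorem Pins.mono (h : Pins G L K y) (hK : K ⊆ K') : Pins G L K' y :=
  fun f hf => h f (hf.mono hK)

/-- No list coloring of `K` and the vertices `x.1`, `z.1` gives them the colors `x.2`, `z.2`. -/
def Excludes (G : SimpleGraph V) (L : V → Finset ℕ) (K : Set V) (x z : V × ℕ) : Prop :=
  ∀ f, IsListColoring G L (K ∪ {x.1, z.1}) f → f x.1 = x.2 → f z.1 ≠ z.2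

theorem Excludes.mono (h : Excludes G L K x z) (hK : K ⊆ K') : Excludes G L K' x z :=
  fun f hf => h f (hf.mono (Set.union_subset_union_left _ hK))

end Coloring

section Forcing

variable {V : Type*} {G : SimpleGraph V} {L : V → Finset ℕ} {w x y z : V × ℕ} {a b m n : ℕ}

/-- The update step of a propagation path: giving `x.1` the color `x.2` leaves `z.2` as the only
color of its neighbor `z.1`. -/
structure Forces (G : SimpleGraph V) (L : V → Finset ℕ) (x z : V × ℕ) : Prop where
  adj : G.Adj x.1 z.1
  prev_mem : x.2 ∈ L z.1
  mem : z.2 ∈ L z.1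
  ne : z.2 ≠ x.2
  card_eq_two : (L z.1).card = 2

/-- `z` is obtained from `x` by `n` successive update steps; vertices may repeat. -/
def ForcesIn (G : SimpleGraph V) (L : V → Finset ℕ) : ℕ → V × ℕ → V × ℕ → Prop
  | 0, x, z => x = z
  | n + 1, x, z => ∃ w, ForcesIn G L n x w ∧ Forces G L w z

/-- Adjacent vertices with the same color. -/
def Clash (G : SimpleGraph V) (x z : V × ℕ) : Prop := G.Adj x.1 z.1 ∧ x.2 = z.2

/-- The contradiction that closes a propagation `y ⇝ x ⇝ z`: either `z` clashes with `x`, or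
`x = z` and the color of `z` exhausts the list of some neighbor. -/
def Contradicts (G : SimpleGraph V) (L : V → Finset ℕ) (x z : V × ℕ) : Prop :=
  Clash G x z ∨ (x = z ∧ ∃ q, G.Adj z.1 q ∧ L q = {z.2})

/-- Propagating from `y` leads to a contradiction within `t` update steps in total. -/
def ContradictedIn (G : SimpleGraph V) (L : V → Finset ℕ) (y : V × ℕ) (t : ℕ) : Prop :=
  ∃ a b x z, a + b = t ∧ ForcesIn G L a y x ∧ ForcesIn G L b x z ∧ Contradicts G L x z

theorem Clash.symm (h : Clash G x z) : Clash G z x := ⟨h.1.symm, h.2.symm⟩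

theorem Contradicts.exists_excludes (h : Contradicts G L x z) :
    ∃ Q : Set V, Q.encard ≤ 1 ∧ Excludes G L Q x z := by
  rcases h with ⟨hadj, hcol⟩ | ⟨-, q, hadj, hq⟩
  · exact ⟨∅, by simp, fun f hf hx hz =>
      hf.ne _ (by simp) _ (by simp) hadj ((hx.trans hcol).trans hz.symm)⟩
  · refine ⟨{q}, by simp, fun f hf _ hz => ?_⟩
    have hfq : f q = z.2 := by simpa [hq] using hf.mem q (by simp)
    exact hf.ne _ (by simp) q (by simp) hadj (hz.trans hfq.symm)

theorem Forces.forcesIn (h : Forces G L x z) : ForcesIn G L 1 x z := ⟨x, rfl, h⟩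

theorem ForcesIn.trans (hxw : ForcesIn G L m x w) (hwz : ForcesIn G L n w z) :
    ForcesIn G L (m + n) x z := by
  induction n generalizing z with
  | zero => obtain rfl : w = z := hwz; exact hxw
  | succ n ih =>
    obtain ⟨u, hwu, huz⟩ := hwz
    exact ⟨u, ih hwu, huz⟩

theorem ForcesIn.mem (h : ForcesIn G L n y x) (hy : y.2 ∈ L y.1) : x.2 ∈ L x.1 := by
  cases n with
  | zero => obtain rfl : y = x := h; exact hy
  | succ n => obtain ⟨w, -, hwx⟩ := h; exact hwx.mem

theorem ForcesIn.exists_reverse (h : ForcesIn G L n x z) (hw : Clash G w z) :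
    ∃ z', ForcesIn G L n w z' ∧ Clash G z' x := by
  induction n generalizing z w with
  | zero => obtain rfl : x = z := h; exact ⟨w, rfl, hw⟩
  | succ n ih =>
    obtain ⟨u, hxu, huz⟩ := h
    obtain ⟨z', hz', hclash⟩ := ih (w := (z.1, u.2)) hxu ⟨huz.adj.symm, rfl⟩
    have hback : Forces G L w (z.1, u.2) :=
      ⟨hw.1, hw.2 ▸ huz.mem, huz.prev_mem, hw.2 ▸ huz.ne.symm, huz.card_eq_two⟩
    exact ⟨z', add_comm 1 n ▸ hback.forcesIn.trans hz', hclash⟩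

theorem ForcesIn.exists_contradictedIn (hx : ForcesIn G L m y x) (hz : ForcesIn G L n y z)
    (hclash : Clash G x z) : ∃ t, ContradictedIn G L y t := by
  obtain ⟨z', hxz', hz'⟩ := hz.exists_reverse hclash
  exact ⟨_, 0, m + n, y, z', rfl, rfl, hx.trans hxz', Or.inl hz'.symm⟩

theorem ForcesIn.color_ne_of_unreached (hsize : ∀ v, (L v).card ≤ 2) {v : V}
    (hx : ForcesIn G L n y x) (hno : ¬ ∃ t, ContradictedIn G L y t) (hadj : G.Adj x.1 v)
    (hv : ∀ c m, ¬ ForcesIn G L m y (v, c)) {c : ℕ} (hc : c ∈ L v) : x.2 ≠ c := by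
  rintro rfl
  by_cases hex : ∃ d ∈ L v, d ≠ x.2
  · obtain ⟨d, hd, hne⟩ := hex
    have hcard : (L v).card = 2 :=
      le_antisymm (hsize v) (Finset.one_lt_card.mpr ⟨d, hd, x.2, hc, hne⟩)
    exact hv d (n + 1) ⟨x, hx, hadj, hc, hd, hne, hcard⟩
  · push Not at hex
    have hsingle : L v = {x.2} := Finset.eq_singleton_iff_unique_mem.mpr ⟨hc, hex⟩
    exact hno ⟨n, n, 0, x, x, rfl, hx, rfl, Or.inr ⟨rfl, v, hadj, hsingle⟩⟩

-- Otherwise the forced colors, together with any coloring of the unreached vertices, color `G`.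
theorem MinimalListObstruction.exists_contradictedIn (hmin : MinimalListObstruction G L)
    (hsize : ∀ v, (L v).card ≤ 2) (hy : y.2 ∈ L y.1) : ∃ t, ContradictedIn G L y t := by
  by_contra hno
  let R : Set V := {v | ∃ c n, ForcesIn G L n y (v, c)}
  have hforced : ∀ v, ∃ c, v ∈ R → ∃ n, ForcesIn G L n y (v, c) := fun v => by
    by_cases hv : v ∈ R
    · exact hv.imp fun c hc _ => hc
    · exact ⟨0, fun h => absurd h hv⟩
  choose f hf using hforced
  have hfR : IsListColoring G L R f := by
    refine ⟨fun v hv => ?_, fun u hu w hw hadj heq => ?_⟩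
    · obtain ⟨n, hn⟩ := hf v hv
      exact hn.mem hy
    · obtain ⟨m, hm⟩ := hf u hu
      obtain ⟨n, hn⟩ := hf w hw
      exact hno (hm.exists_contradictedIn hn ⟨hadj, heq⟩)
  have hRc : Rᶜ ≠ Set.univ := by
    rw [ne_eq, Set.compl_univ_iff]
    exact Set.Nonempty.ne_empty ⟨y.1, y.2, 0, rfl⟩
  obtain ⟨f', hf'⟩ := (hmin.2 _ hRc).exists_isListColoring
  refine hmin.1 (hfR.listColorableOn_univ hf' fun u hu w hw hadj => ?_)
  obtain ⟨n, hn⟩ := hf u hu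
  exact hn.color_ne_of_unreached hsize hno hadj (fun c m h => hw ⟨c, m, h⟩) (hf'.mem w hw)

end Forcing

section Propagation

variable {V : Type*} {G : SimpleGraph V} {L : V → Finset ℕ} {g : ℕ → V × ℕ} {n i j : ℕ}

/-- A propagation with `n` update steps, whose `i`-th vertex `(g i).1` receives the color
`(g i).2`. Values of `g` beyond `n` are irrelevant and vertices may repeat. Unlike in
`PropPath`, chords are arbitrary. -/
structure IsPropagation (G : SimpleGraph V) (L : V → Finset ℕ) (g : ℕ → V × ℕ) (n : ℕ) :
    Prop where
  start_mem : (g 0).2 ∈ L (g 0).1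
  forces : ∀ i < n, Forces G L (g i) (g (i + 1))

/-- The condition on the chord from `x.1` to a later vertex `z.1` of a propagation path: if both
lists have size two, it says that the shapes are `αβ` at `x.1` and `βγ` at `z.1`. -/
def ShapedChord (L : V → Finset ℕ) (x z : V × ℕ) : Prop := x.2 ∉ L z.1 ∧ z.2 ∈ L x.1

theorem ShapedChord.exists_shape {x z : V × ℕ} (h : ShapedChord L x z) (hx : x.2 ∈ L x.1)
    (hz : z.2 ∈ L z.1) (hxcard : (L x.1).card = 2) (hzcard : (L z.1).card = 2) :
    ∃ α β γ : ℕ, α ≠ β ∧ β ≠ γ ∧ α ≠ γ ∧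
      L x.1 = {α, β} ∧ x.2 = α ∧ L z.1 = {β, γ} ∧ z.2 = β := by
  have hne : x.2 ≠ z.2 := (ne_of_mem_of_not_mem hz h.1).symm
  obtain ⟨γ, hγ, hγne⟩ := Finset.exists_mem_ne (hzcard ▸ one_lt_two) z.2
  exact ⟨x.2, z.2, γ, hne, hγne.symm, (ne_of_mem_of_not_mem hγ h.1).symm,
    eq_pair_of_mem_of_mem_of_card_eq_two hxcard hx h.2 hne, rfl,
    eq_pair_of_mem_of_mem_of_card_eq_two hzcard hz hγ hγne.symm, rfl⟩

namespace IsPropagation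

theorem forcesIn (h : IsPropagation G L g n) (hij : i ≤ j) (hj : j ≤ n) :
    ForcesIn G L (j - i) (g i) (g j) := by
  induction j, hij using Nat.le_induction with
  | base => rw [Nat.sub_self]; rfl
  | succ j hij ih =>
    rw [Nat.succ_sub hij]
    exact ⟨g j, ih (by omega), h.forces j (by omega)⟩

theorem mem (h : IsPropagation G L g n) (hi : i ≤ n) : (g i).2 ∈ L (g i).1 :=
  (h.forcesIn i.zero_le hi).mem h.start_mem

theorem card_eq_two (h : IsPropagation G L g n) (hpos : 0 < i) (hi : i ≤ n) :
    (L (g i).1).card = 2 := by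
  obtain ⟨k, rfl⟩ : ∃ k, i = k + 1 := ⟨i - 1, by omega⟩
  exact (h.forces k (by omega)).card_eq_two

theorem segment (h : IsPropagation G L g n) {p r : ℕ} (hpr : p + r ≤ n) :
    IsPropagation G L (fun i => g (p + i)) r :=
  ⟨h.mem (by omega), fun i hi => h.forces (p + i) (by omega)⟩

theorem exists_extend {a b : ℕ} {z : V × ℕ} (h : IsPropagation G L g a)
    (hz : ForcesIn G L b (g a) z) :
    ∃ g', IsPropagation G L g' (a + b) ∧ (∀ i ≤ a, g' i = g i) ∧ g' (a + b) = z := by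
  induction b generalizing z with
  | zero => exact ⟨g, h, fun _ _ => rfl, hz⟩
  | succ b ih =>
    obtain ⟨w, hw, hwz⟩ := hz
    obtain ⟨g', hg', heq, hlast⟩ := ih hw
    have hold : ∀ i ≤ a + b, Function.update g' (a + b + 1) z i = g' i := fun i hi =>
      Function.update_of_ne (by omega) _ _
    refine ⟨Function.update g' (a + b + 1) z, ⟨?_, fun i hi => ?_⟩, fun i hi => ?_,
      Function.update_self _ _ _⟩
    · rw [hold 0 (by omega)]
      exact hg'.start_mem
    · rcases Nat.lt_or_ge i (a + b) with hlt | hge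
      · rw [hold i hlt.le, hold (i + 1) hlt]
        exact hg'.forces i hlt
      · obtain rfl : i = a + b := by omega
        rw [hold _ le_rfl, Function.update_self, hlast]
        exact hwz
    · rw [hold i (by omega), heq i hi]

theorem clash_of_fst_eq (h : IsPropagation G L g n) (hij : i < j) (hj : j ≤ n)
    (hv : (g i).1 = (g j).1) (hc : (g i).2 ≠ (g j).2) : Clash G (g i) (g (j - 1)) := by
  obtain ⟨k, rfl⟩ : ∃ k, j = k + 1 := ⟨j - 1, by omega⟩
  have hk := h.forces k (by omega)
  exact ⟨hv ▸ hk.adj.symm, eq_of_ne_of_ne_of_card_le_two hk.card_eq_two.le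
    (hv ▸ h.mem (by omega)) hk.mem hk.prev_mem hc hk.ne.symm⟩

theorem coloring_eq (h : IsPropagation G L g n) {S : Set V} {f : V → ℕ}
    (hf : IsListColoring G L S f) (hij : i ≤ j) (hj : j ≤ n)
    (hS : ∀ k, i ≤ k → k ≤ j → (g k).1 ∈ S) (hi : f (g i).1 = (g i).2) :
    f (g j).1 = (g j).2 := by
  induction j, hij using Nat.le_induction with
  | base => exact hi
  | succ j hij ih =>
    have hprev := ih (by omega) (fun k hik hkj => hS k hik (by omega))
    have hstep := h.forces j (by omega)
    have hmem := hS (j + 1) (by omega) le_rfl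
    refine eq_of_ne_of_ne_of_card_le_two hstep.card_eq_two.le (hf.mem _ hmem) hstep.prev_mem
      hstep.mem ?_ hstep.ne
    rw [← hprev]
    exact (hf.ne _ (hS j hij (by omega)) _ hmem hstep.adj).symm

-- Any other color of `g i` is, by the palette, the only other color of `g j`.
theorem coloring_eq_of_chord {C : Finset ℕ} (hC : C.card ≤ 3) (hL : ∀ v, L v ⊆ C)
    (h : IsPropagation G L g n) {S : Set V} {f : V → ℕ} (hf : IsListColoring G L S f)
    (hij : i ≤ j) (hj : j ≤ n) (hadj : G.Adj (g i).1 (g j).1) (hi : (g i).2 ∉ L (g j).1)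
    (hj' : (g j).2 ∉ L (g i).1) (hS : ∀ k, i ≤ k → k ≤ j → (g k).1 ∈ S) :
    f (g j).1 = (g j).2 := by
  by_cases hfi : f (g i).1 = (g i).2
  · exact h.coloring_eq hf hij hj hS hfi
  have hSi := hS i le_rfl hij
  have hSj := hS j hij le_rfl
  by_contra hfj
  exact hf.ne _ hSi _ hSj hadj (eq_of_ne_of_ne_of_card_le_three hC (hL _) (hL _)
    (h.mem (hij.trans hj)) (h.mem hj) hi hj' (hf.mem _ hSi) (hf.mem _ hSj) hfi hfj)

theorem exists_propPath (h : IsPropagation G L g n)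
    (hinj : Set.InjOn (fun k => (g k).1) (Set.Iic n))
    (hshape : ∀ i j, 0 < i → i + 2 ≤ j → j ≤ n → G.Adj (g i).1 (g j).1 →
      ShapedChord L (g i) (g j)) : ∃ P : PropPath G L, P.n = n :=
  ⟨{ n := n
     v := fun i => (g i).1
     inj := fun i j hij => Fin.ext (hinj (Nat.le_of_lt_succ i.2) (Nat.le_of_lt_succ j.2) hij)
     adj := fun i => (h.forces i i.2).adj
     c := fun i => (g i).2
     start_mem := h.start_mem
     size2 := fun i hi => h.card_eq_two (Fin.pos_iff_ne_zero.mpr hi) (Nat.le_of_lt_succ i.2)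
     upd := fun i =>
       let hi := h.forces i i.2
       ⟨hi.mem, hi.prev_mem, hi.ne⟩
     chord := fun i j hi hij hadj =>
       (hshape i j (by omega) hij (by omega) hadj).exists_shape (h.mem (by omega))
         (h.mem (by omega)) (h.card_eq_two (by omega) (by omega))
         (h.card_eq_two (by omega) (by omega)) }, rfl⟩

variable {lam : ℕ}

theorem sub_le_of_shapedChord (hpaths : ∀ P : PropPath G L, P.n + 1 ≤ lam)
    (h : IsPropagation G L g n) (hinj : Set.InjOn (fun k => (g k).1) (Set.Iic n)) {p r : ℕ}
    (hr : r ≤ n + 1)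
    (hshape : ∀ i j, p < i → i + 2 ≤ j → j < r → G.Adj (g i).1 (g j).1 →
      ShapedChord L (g i) (g j)) : r - p ≤ lam := by
  rcases Nat.lt_or_ge p r with hpr | hrp
  · obtain ⟨P, hP⟩ := (h.segment (p := p) (r := r - p - 1) (by omega)).exists_propPath
      (fun i hi j hj hij => by
        simp only [Set.mem_Iic] at hi hj
        exact Nat.add_left_cancel (hinj (by simp only [Set.mem_Iic]; omega)
          (by simp only [Set.mem_Iic]; omega) hij))
      (fun i j hi hij hj => hshape (p + i) (p + j) (by omega) (by omega) (by omega))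
    have := hpaths P
    omega
  · omega

theorem encard_image_Ico_diff_le (hpaths : ∀ P : PropPath G L, P.n + 1 ≤ lam)
    (h : IsPropagation G L g n) (hinj : Set.InjOn (fun k => (g k).1) (Set.Iic n)) {K : Set V}
    {a b : ℕ} (hb : b ≤ n + 1)
    (hshape : ∀ p i j, a ≤ p → (g p).1 ∉ K → p < i → i + 2 ≤ j → j < b →
      G.Adj (g i).1 (g j).1 → ShapedChord L (g i) (g j)) :
    ((fun k => (g k).1) '' Set.Ico a b \ K).encard ≤ lam := by
  classical
  by_cases hex : ∃ p, a ≤ p ∧ (g p).1 ∉ K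
  · obtain ⟨hap, hpK⟩ := Nat.find_spec hex
    have hsubset : (fun k => (g k).1) '' Set.Ico a b \ K ⊆
        (fun k => (g k).1) '' Set.Ico (Nat.find hex) b := by
      rintro _ ⟨⟨k, hk, rfl⟩, hkK⟩
      exact ⟨k, ⟨Nat.find_min' hex ⟨hk.1, hkK⟩, hk.2⟩, rfl⟩
    have hlen := h.sub_le_of_shapedChord hpaths hinj hb (hshape (Nat.find hex) · · hap hpK)
    calc _ ≤ _ := Set.encard_le_encard hsubset
      _ ≤ _ := encard_image_Ico_le _ _ _
      _ ≤ lam := by exact_mod_cast hlen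
  · push Not at hex
    have hempty : (fun k => (g k).1) '' Set.Ico a b \ K = ∅ := by
      rw [Set.sdiff_eq_empty]
      rintro _ ⟨k, hk, rfl⟩
      exact hex k hk.1
    simp [hempty]

end IsPropagation

theorem ForcesIn.exists_isPropagation {x z : V × ℕ} (h : ForcesIn G L n x z)
    (hx : x.2 ∈ L x.1) : ∃ g, IsPropagation G L g n ∧ g 0 = x ∧ g n = z := by
  have hconst : IsPropagation G L (fun _ => x) 0 := ⟨hx, fun i hi => absurd hi i.not_lt_zero⟩
  obtain ⟨g, hg, hg0, hgn⟩ := hconst.exists_extend h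
  rw [Nat.zero_add] at hg hgn
  exact ⟨g, hg, hg0 0 le_rfl, hgn⟩

end Propagation

section ShortestContradiction

variable {V : Type*} {G : SimpleGraph V} {L : V → Finset ℕ} {g : ℕ → V × ℕ} {s t i j : ℕ}

/-- A propagation with the least number `t` of update steps that leads from the colored vertex
`g 0` to a contradiction; the contradiction is between `g s` and `g t`. -/
structure IsShortestContradiction (G : SimpleGraph V) (L : V → Finset ℕ) (g : ℕ → V × ℕ)
    (s t : ℕ) : Prop where
  isPropagation : IsPropagation G L g t
  le : s ≤ t
  contradicts : Contradicts G L (g s) (g t)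
  minimal : ∀ t', ContradictedIn G L (g 0) t' → t ≤ t'

open Classical in
theorem exists_isShortestContradiction {y : V × ℕ} (hy : y.2 ∈ L y.1)
    (hex : ∃ t, ContradictedIn G L y t) :
    ∃ g s t, g 0 = y ∧ IsShortestContradiction G L g s t := by
  obtain ⟨a, b, x, z, hab, hx, hz, hcon⟩ := Nat.find_spec hex
  obtain ⟨g, hg, hg0, hga⟩ := hx.exists_isPropagation hy
  obtain ⟨g', hg', heq, hlast⟩ := hg.exists_extend (hga.symm ▸ hz)
  have hy' : g' 0 = y := (heq 0 a.zero_le).trans hg0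
  refine ⟨g', a, a + b, hy', hg', Nat.le_add_right a b, ?_, fun t' ht' => ?_⟩
  · rwa [heq a le_rfl, hga, hlast]
  · rw [hab]
    exact Nat.find_min' hex (hy' ▸ ht')

namespace IsShortestContradiction

theorem le_add (h : IsShortestContradiction G L g s t) {a b : ℕ} {x z : V × ℕ}
    (hx : ForcesIn G L a (g 0) x) (hz : ForcesIn G L b x z) (hcon : Contradicts G L x z) :
    t ≤ a + b :=
  h.minimal _ ⟨a, b, x, z, rfl, hx, hz, hcon⟩

theorem not_clash (h : IsShortestContradiction G L g s t) (hij : i ≤ j) (hj : j < t) :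
    ¬ Clash G (g i) (g j) := fun hclash => by
  have := h.le_add (h.isPropagation.forcesIn i.zero_le (by omega))
    (h.isPropagation.forcesIn hij hj.le) (Or.inl hclash)
  omega

theorem le_add_of_forcesIn (h : IsShortestContradiction G L g s t) (hij : i ≤ j) (hj : j ≤ t)
    (hside : j ≤ s ∨ s ≤ i) {k : ℕ} (hk : ForcesIn G L k (g i) (g j)) : j ≤ i + k := by
  have hp := h.isPropagation
  have hst := h.le
  rcases hside with hjs | hsi
  · have := h.le_add (((hp.forcesIn i.zero_le (by omega)).trans hk).trans (hp.forcesIn hjs hst))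
      (hp.forcesIn hst le_rfl) h.contradicts
    omega
  · have := h.le_add (hp.forcesIn s.zero_le hst)
      (((hp.forcesIn hsi (by omega)).trans hk).trans (hp.forcesIn hj le_rfl)) h.contradicts
    omega

-- Were the two equal, the loop could be traversed backwards from `s`, skipping the part from `i`
-- to `j`.
theorem ne_of_lt_of_lt (h : IsShortestContradiction G L g s t) (his : i < s) (hsj : s < j)
    (hj : j ≤ t) : g i ≠ g j := by
  intro heq
  have hp := h.isPropagation
  rcases h.contradicts with hclash | ⟨hst, hq⟩
  · obtain ⟨z, hsz, hzj⟩ := (hp.forcesIn hj le_rfl).exists_reverse hclash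
    have := h.le_add (hp.forcesIn i.zero_le (by omega)) ((hp.forcesIn his.le h.le).trans hsz)
      (Or.inl (heq ▸ hzj.symm))
    omega
  · have := h.le_add (b := 0) (hp.forcesIn s.zero_le h.le) rfl (Or.inr ⟨rfl, hst ▸ hq⟩)
    omega

theorem fst_ne (h : IsShortestContradiction G L g s t) (hij : i < j) (hj : j ≤ t) :
    (g i).1 ≠ (g j).1 := by
  intro hv
  by_cases hc : (g i).2 = (g j).2
  · have heq : g i = g j := Prod.ext hv hc
    rcases Classical.em (j ≤ s ∨ s ≤ i) with hside | hside
    · exact hij.not_ge (h.le_add_of_forcesIn (k := 0) hij.le hj hside heq)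
    · exact h.ne_of_lt_of_lt (by omega) (by omega) hj heq
  · exact h.not_clash (by omega) (by omega) (h.isPropagation.clash_of_fst_eq hij hj hv hc)

theorem injOn (h : IsShortestContradiction G L g s t) :
    Set.InjOn (fun k => (g k).1) (Set.Iic t) := by
  intro i hi j hj hij
  by_contra hne
  rcases lt_or_gt_of_ne hne with hlt | hlt
  · exact h.fst_ne hlt hj hij
  · exact h.fst_ne hlt hi hij.symm

theorem color_notMem_of_chord (h : IsShortestContradiction G L g s t) (hij : i + 2 ≤ j)
    (hj : j < t) (hside : j ≤ s ∨ s ≤ i) (hadj : G.Adj (g i).1 (g j).1) :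
    (g i).2 ∉ L (g j).1 := by
  intro hmem
  have hp := h.isPropagation
  have hne : (g j).2 ≠ (g i).2 := fun heq => h.not_clash (by omega) hj ⟨hadj, heq.symm⟩
  have hshort : Forces G L (g i) (g j) :=
    ⟨hadj, hmem, hp.mem hj.le, hne, hp.card_eq_two (by omega) hj.le⟩
  have := h.le_add_of_forcesIn (by omega) hj.le hside hshort.forcesIn
  omega

variable {K : Set V}

theorem false_of_coloring (h : IsShortestContradiction G L g s t)
    (hK : Excludes G L K (g s) (g t)) {w : V} {f : V → ℕ} (hf : IsListColoring G L {w}ᶜ f)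
    (hwK : w ∉ K) (hws : (g s).1 ≠ w) (hjt : j ≤ t)
    (hj : ∀ k, j ≤ k → k ≤ t → (g k).1 ≠ w)
    (hfs : f (g s).1 = (g s).2) (hfj : f (g j).1 = (g j).2) : False := by
  have hsub : K ∪ {(g s).1, (g t).1} ⊆ {w}ᶜ := by
    rintro u (hu | rfl | rfl)
    · exact ne_of_mem_of_not_mem hu hwK
    · exact hws
    · exact hj t hjt le_rfl
  exact hK f (hf.mono hsub) hfs (h.isPropagation.coloring_eq hf hjt le_rfl hj hfj)

theorem mem_or_exists_fst_eq (hmin : MinimalListObstruction G L)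
    (h : IsShortestContradiction G L g s t) (hpin : Pins G L K (g 0))
    (hK : Excludes G L K (g s) (g t)) (w : V) : w ∈ K ∨ ∃ k ≤ t, (g k).1 = w := by
  by_contra! ⟨hwK, hw⟩
  obtain ⟨f, hf⟩ := hmin.exists_coloring_compl_singleton w
  have hf0 : f (g 0).1 = (g 0).2 := hpin f (hf.mono (Set.subset_compl_singleton_iff.mpr hwK))
  have hfs := h.isPropagation.coloring_eq hf s.zero_le h.le (fun k _ hk => hw k (hk.trans h.le)) hf0
  exact h.false_of_coloring hK hf hwK (hw s h.le) t.zero_le (fun k _ hk => hw k hk) hfs hf0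

-- Otherwise, in every coloring of `G - g p`, the chord alone forces the propagation from `g j` on.
theorem shapedChord {C : Finset ℕ} (hC : C.card ≤ 3) (hL : ∀ v, L v ⊆ C)
    (hmin : MinimalListObstruction G L) (h : IsShortestContradiction G L g s t)
    (hpin : Pins G L K (g 0)) (hK : Excludes G L K (g s) (g t)) {p : ℕ}
    (hside : j < s ∨ s < p) (hpK : (g p).1 ∉ K) (hpi : p < i) (hij : i + 2 ≤ j) (hj : j < t)
    (hadj : G.Adj (g i).1 (g j).1) : ShapedChord L (g i) (g j) := by
  have hp := h.isPropagation
  have hst := h.le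
  have hnot := h.color_notMem_of_chord hij hj (by omega) hadj
  refine ⟨hnot, ?_⟩
  by_contra hnot'
  obtain ⟨f, hf⟩ := hmin.exists_coloring_compl_singleton (g p).1
  have hkeep : ∀ k ≤ t, k ≠ p → (g k).1 ∈ ({(g p).1}ᶜ : Set V) := fun k hk hkp =>
    h.injOn.ne hk (Set.mem_Iic.mpr (by omega)) hkp
  have hfj : f (g j).1 = (g j).2 :=
    hp.coloring_eq_of_chord hC hL hf (by omega) hj.le hadj hnot hnot'
      (fun k hik hkj => hkeep k (by omega) (by omega))
  have hfs : f (g s).1 = (g s).2 := by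
    rcases hside with hjs | hsp
    · exact hp.coloring_eq hf hjs.le hst (fun k _ _ => hkeep k (by omega) (by omega)) hfj
    · exact hp.coloring_eq hf s.zero_le hst (fun k _ _ => hkeep k (by omega) (by omega))
        (hpin f (hf.mono (Set.subset_compl_singleton_iff.mpr hpK)))
  exact h.false_of_coloring hK hf hpK (hkeep s hst (by omega)) hj.le
    (fun k hjk hkt => hkeep k hkt (by omega)) hfs hfj

theorem card_le {C : Finset ℕ} (hC : C.card ≤ 3) (hL : ∀ v, L v ⊆ C)
    (hmin : MinimalListObstruction G L) {lam : ℕ} (hpaths : ∀ P : PropPath G L, P.n + 1 ≤ lam)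
    (h : IsShortestContradiction G L g s t) (hpin : Pins G L K (g 0))
    (hK : Excludes G L K (g s) (g t)) : ENat.card V ≤ K.encard + 2 * lam + 2 := by
  set stem := (fun k => (g k).1) '' Set.Ico 0 s \ K
  set loop := (fun k => (g k).1) '' Set.Ico (s + 1) t \ K
  have hstem : stem.encard ≤ lam :=
    h.isPropagation.encard_image_Ico_diff_le hpaths h.injOn (h.le.trans t.le_succ)
      fun p i j _ hpK hpi hij hj =>
        h.shapedChord hC hL hmin hpin hK (Or.inl hj) hpK hpi hij (hj.trans_le h.le)
  have hloop : loop.encard ≤ lam :=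
    h.isPropagation.encard_image_Ico_diff_le hpaths h.injOn t.le_succ
      fun p i j hp hpK hpi hij hj => h.shapedChord hC hL hmin hpin hK (Or.inr hp) hpK hpi hij hj
  have hcover : Set.univ ⊆ K ∪ (stem ∪ loop) ∪ {(g s).1, (g t).1} := by
    intro w _
    by_cases hwK : w ∈ K
    · exact Or.inl (Or.inl hwK)
    obtain ⟨k, hk, rfl⟩ := (h.mem_or_exists_fst_eq hmin hpin hK w).resolve_left hwK
    rcases lt_trichotomy k s with hks | rfl | hsk
    · exact Or.inl (Or.inr (Or.inl ⟨⟨k, ⟨k.zero_le, hks⟩, rfl⟩, hwK⟩))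
    · exact Or.inr (Or.inl rfl)
    · rcases hk.lt_or_eq with hkt | rfl
      · exact Or.inl (Or.inr (Or.inr ⟨⟨k, ⟨hsk, hkt⟩, rfl⟩, hwK⟩))
      · exact Or.inr (Or.inr rfl)
  have hpair : ({(g s).1, (g t).1} : Set V).encard ≤ 2 := by
    simpa [one_add_one_eq_two] using Set.encard_insert_le {(g t).1} (g s).1
  calc ENat.card V = (Set.univ : Set V).encard := (Set.encard_univ V).symm
    _ ≤ (K ∪ (stem ∪ loop) ∪ {(g s).1, (g t).1}).encard := Set.encard_le_encard hcover
    _ ≤ K.encard + (stem.encard + loop.encard) + ({(g s).1, (g t).1} : Set V).encard := by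
      grw [Set.encard_union_le, Set.encard_union_le, Set.encard_union_le]
    _ ≤ K.encard + (lam + lam) + 2 := by gcongr
    _ = K.encard + 2 * lam + 2 := by rw [two_mul]

end IsShortestContradiction

end ShortestContradiction

section ShortestClash

variable {V : Type*} {G : SimpleGraph V} {L : V → Finset ℕ} {g : ℕ → V × ℕ} {m : ℕ}

/-- A propagation whose two ends clash, with the least number `m` of update steps among all such
propagations in `(G, L)`, whatever their first colored vertex. -/
structure IsShortestClash (G : SimpleGraph V) (L : V → Finset ℕ) (g : ℕ → V × ℕ) (m : ℕ) :
    Prop where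
  isPropagation : IsPropagation G L g m
  clash : Clash G (g 0) (g m)
  minimal : ∀ n x z, x.2 ∈ L x.1 → ForcesIn G L n x z → Clash G x z → m ≤ n

open Classical in
theorem MinimalListObstruction.exists_isShortestClash (hmin : MinimalListObstruction G L)
    (hcard : ∀ v, (L v).card = 2) : ∃ g m, IsShortestClash G L g m := by
  have hex : ∃ n x z, x.2 ∈ L x.1 ∧ ForcesIn G L n x z ∧ Clash G x z := by
    obtain ⟨u⟩ := hmin.nonempty
    obtain ⟨c, hc⟩ := Finset.card_pos.mp (hcard u ▸ two_pos)
    obtain ⟨_, a, b, x, z, -, hx, hz, hcon⟩ :=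
      hmin.exists_contradictedIn (fun v => (hcard v).le) (y := (u, c)) hc
    refine ⟨b, x, z, hx.mem hc, hz, hcon.resolve_right ?_⟩
    rintro ⟨-, q, -, hq⟩
    simpa [hq] using hcard q
  obtain ⟨x, z, hx, hxz, hclash⟩ := Nat.find_spec hex
  obtain ⟨g, hg, hg0, hgm⟩ := hxz.exists_isPropagation hx
  refine ⟨g, Nat.find hex, hg, ?_, fun n x z hx hn hc => Nat.find_min' hex ⟨x, z, hx, hn, hc⟩⟩
  rwa [hg0, hgm]

namespace IsShortestClash

theorem isShortestContradiction (h : IsShortestClash G L g m) (hcard : ∀ v, (L v).card = 2) :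
    IsShortestContradiction G L g 0 m where
  isPropagation := h.isPropagation
  le := m.zero_le
  contradicts := Or.inl h.clash
  minimal := by
    rintro _ ⟨a, b, x, z, rfl, hx, hz, hclash | ⟨-, q, -, hq⟩⟩
    · exact (h.minimal b x z (hx.mem h.isPropagation.start_mem) hz hclash).trans
        (Nat.le_add_left b a)
    · simpa [hq] using hcard q

-- If the chord from `i` to `j` is not shaped, then the color of `g (j - 1)` at `g j` forces
-- `g i`, and so leads to a shorter clash, between `g j` and `g (j - 1)`.
theorem shapedChord {C : Finset ℕ} (hC : C.card ≤ 3) (hL : ∀ v, L v ⊆ C)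
    (hcard : ∀ v, (L v).card = 2) (h : IsShortestClash G L g m) {i j : ℕ} (hi : 0 < i)
    (hij : i + 2 ≤ j) (hj : j < m) (hadj : G.Adj (g i).1 (g j).1) :
    ShapedChord L (g i) (g j) := by
  have hp := h.isPropagation
  have hnot : (g i).2 ∉ L (g j).1 :=
    (h.isShortestContradiction hcard).color_notMem_of_chord hij hj (Or.inr i.zero_le) hadj
  refine ⟨hnot, ?_⟩
  by_contra hnot'
  obtain ⟨k, rfl⟩ : ∃ k, j = k + 1 := ⟨j - 1, by omega⟩
  have hk := hp.forces k (by omega)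
  have hmem := hp.mem (i := i) (by omega)
  obtain ⟨d, hd, hdne⟩ := Finset.exists_mem_ne (hcard (g i).1 ▸ one_lt_two) (g i).2
  obtain rfl : d = (g k).2 := eq_of_ne_of_ne_of_card_le_three hC (hL _) (hL _) hmem hk.mem hnot
    hnot' hd hk.prev_mem hdne hk.ne.symm
  have hback : Forces G L ((g (k + 1)).1, (g k).2) (g i) :=
    ⟨hadj.symm, hd, hmem, hdne.symm, hcard _⟩
  have := h.minimal _ _ _ hk.prev_mem
    (hback.forcesIn.trans (hp.forcesIn (show i ≤ k by omega) (by omega))) ⟨hk.adj.symm, rfl⟩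
  omega

theorem length_le {C : Finset ℕ} (hC : C.card ≤ 3) (hL : ∀ v, L v ⊆ C)
    (hcard : ∀ v, (L v).card = 2) {lam : ℕ} (hpaths : ∀ P : PropPath G L, P.n + 1 ≤ lam)
    (h : IsShortestClash G L g m) : m ≤ lam :=
  h.isPropagation.sub_le_of_shapedChord hpaths (h.isShortestContradiction hcard).injOn (p := 0)
    m.le_succ fun _ _ hi hij hj => h.shapedChord hC hL hcard hi hij hj

theorem pins (h : IsShortestClash G L g m) (hcard : (L (g 0).1).card = 2) {d : ℕ}
    (hd : d ∈ L (g 0).1) (hne : d ≠ (g 0).2) :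
    Pins G L ((fun k => (g k).1) '' Set.Ico 0 (m + 1)) ((g 0).1, d) := by
  intro f hf
  have hmem : ∀ k ≤ m, (g k).1 ∈ (fun k => (g k).1) '' Set.Ico 0 (m + 1) := fun k hk =>
    ⟨k, ⟨k.zero_le, Nat.lt_succ_of_le hk⟩, rfl⟩
  have hp := h.isPropagation
  have hf0 : f (g 0).1 ≠ (g 0).2 := fun heq =>
    have hfm := hp.coloring_eq hf m.zero_le le_rfl (fun k _ => hmem k) heq
    hf.ne _ (hmem 0 m.zero_le) _ (hmem m le_rfl) h.clash.1
      ((heq.trans h.clash.2).trans hfm.symm)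
  exact eq_of_ne_of_ne_of_card_le_two hcard.le (hf.mem _ (hmem 0 m.zero_le)) hp.start_mem hd hf0 hne

end IsShortestClash

end ShortestClash

section Bounds

variable {V : Type*} {G : SimpleGraph V} {L : V → Finset ℕ} {C : Finset ℕ} {lam : ℕ}

namespace MinimalListObstruction

theorem card_le_of_pins (hmin : MinimalListObstruction G L) (hC : C.card ≤ 3)
    (hL : ∀ v, L v ⊆ C) (hsize : ∀ v, (L v).card ≤ 2)
    (hpaths : ∀ P : PropPath G L, P.n + 1 ≤ lam) {K : Set V} {y : V × ℕ} (hy : y.2 ∈ L y.1)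
    (hpin : Pins G L K y) : ENat.card V ≤ K.encard + 2 * lam + 3 := by
  obtain ⟨g, s, t, rfl, h⟩ :=
    exists_isShortestContradiction hy (hmin.exists_contradictedIn hsize hy)
  obtain ⟨Q, hQ, hexcl⟩ := h.contradicts.exists_excludes
  calc ENat.card V ≤ (K ∪ Q).encard + 2 * lam + 2 :=
        h.card_le hC hL hmin hpaths (hpin.mono Set.subset_union_left)
          (hexcl.mono Set.subset_union_right)
    _ ≤ K.encard + 1 + 2 * lam + 2 := by grw [Set.encard_union_le, hQ]
    _ = K.encard + 2 * lam + 3 := by ring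

theorem card_le_of_eq_singleton (hmin : MinimalListObstruction G L) (hC : C.card ≤ 3)
    (hL : ∀ v, L v ⊆ C) (hsize : ∀ v, (L v).card ≤ 2)
    (hpaths : ∀ P : PropPath G L, P.n + 1 ≤ lam) {u : V} {c : ℕ} (hu : L u = {c}) :
    ENat.card V ≤ (2 * lam + 4 : ℕ) := by
  have hpin : Pins G L {u} (u, c) := fun f hf => by simpa [hu] using hf.mem u rfl
  calc ENat.card V ≤ ({u} : Set V).encard + 2 * lam + 3 :=
        hmin.card_le_of_pins hC hL hsize hpaths (by simp [hu]) hpin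
    _ = (2 * lam + 4 : ℕ) := by rw [Set.encard_singleton]; push_cast; ring

theorem card_le_of_card_eq_two (hmin : MinimalListObstruction G L) (hC : C.card ≤ 3)
    (hL : ∀ v, L v ⊆ C) (hcard : ∀ v, (L v).card = 2)
    (hpaths : ∀ P : PropPath G L, P.n + 1 ≤ lam) : ENat.card V ≤ (3 * lam + 4 : ℕ) := by
  obtain ⟨g, m, h⟩ := hmin.exists_isShortestClash hcard
  obtain ⟨d, hd, hne⟩ := Finset.exists_mem_ne (hcard (g 0).1 ▸ one_lt_two) (g 0).2
  have hm : m + 1 - 0 ≤ lam + 1 := Nat.succ_le_succ (h.length_le hC hL hcard hpaths)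
  calc ENat.card V ≤ ((fun k => (g k).1) '' Set.Ico 0 (m + 1)).encard + 2 * lam + 3 :=
        hmin.card_le_of_pins hC hL (fun v => (hcard v).le) hpaths (y := ((g 0).1, d)) hd
          (h.pins (hcard _) hd hne)
    _ ≤ ((lam + 1 : ℕ) : ℕ∞) + 2 * lam + 3 := by
      grw [encard_image_Ico_le, hm]
    _ = (3 * lam + 4 : ℕ) := by push_cast; ring

end MinimalListObstruction

end Bounds

theorem stmt_15_general {V : Type*} {G : SimpleGraph V} {L : V → Finset ℕ} {C : Finset ℕ}
    (hC : C.card ≤ 3) (hL : ∀ v, L v ⊆ C) (hsize : ∀ v, (L v).card ≤ 2)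
    (hmin : MinimalListObstruction G L) {lam : ℕ}
    (hpaths : ∀ P : PropPath G L, P.n + 1 ≤ lam) :
    ENat.card V ≤ (3 * lam + 4 : ℕ) := by
  by_cases hempty : ∃ u, L u = ∅
  · obtain ⟨u, hu⟩ := hempty
    have := hmin.subsingleton_of_eq_empty hu
    exact (ENat.card_le_one (α := V)).trans (by exact_mod_cast (by omega : 1 ≤ 3 * lam + 4))
  by_cases hsingle : ∃ u, (L u).card = 1
  · obtain ⟨u, hu⟩ := hsingle
    obtain ⟨c, hc⟩ := Finset.card_eq_one.mp hu
    exact (hmin.card_le_of_eq_singleton hC hL hsize hpaths hc).trans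
      (by exact_mod_cast (by omega : 2 * lam + 4 ≤ 3 * lam + 4))
  push Not at hempty hsingle
  have hcard : ∀ v, (L v).card = 2 := fun v => by
    have := (hempty v).card_pos
    have := hsingle v
    have := hsize v
    omega
  exact hmin.card_le_of_card_eq_two hC hL hcard hpaths

theorem stmt_15 {V : Type*} [Fintype V] (G : SimpleGraph V) (L : V → Finset ℕ)
    (hsub : ∀ v, L v ⊆ ({1, 2, 3} : Finset ℕ)) (hsize : ∀ v, (L v).card ≤ 2)
    (hmin : MinimalListObstruction G L) (lam : ℕ) (hlam : 20 ≤ lam)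
    (hpaths : ∀ P : PropPath G L, P.n + 1 ≤ lam) :
    Fintype.card V ≤ 4 * lam + 4 := by
  have hcard := stmt_15_general Finset.card_le_three hsub hsize hmin hpaths
  rw [ENat.card_eq_coe_fintype_card, Nat.cast_le] at hcard
  omega
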